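/- Let n, l ≥ 1, 1 ≤ p,q ≤ n, and r ≥ 1. Then in U(Q(n))^{⊗l}: ev^{⊗l}∘Δ_l(T_{q,p}^{(r)}) equals (−1)^r times the even component, and ev^{⊗l}∘Δ_l(T_{−q,p}^{(r)}) equals (−1)^r times the odd component, of the sum over all 1 ≤ p_1,…,p_{r−1} ≤ n and all 1 ≤ i_1 < i_2 < … < i_r ≤ l of the ordered products Π_{a=1}^{r} (x^{i_a}_{p_{a−1}, p_a} + (−1)^{r−a} ξ^{i_a}_{p_{a−1}, p_a}), where p_0 := p and p_r := q. -/

import Mathlib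

noncomputable section
open scoped Classical

/-! # The universal enveloping superalgebra `U(Q(n))` of the queer Lie superalgebra

`U(Q(n))` is presented by even generators `e i j` and odd generators `f i j`
(`1 ≤ i,j ≤ n`) subject to the relations
`[e i j, e k l] = δ_{jk} e i l - δ_{li} e k j`,
`[e i j, f k l] = δ_{jk} f i l - δ_{li} f k j`,
`f i j * f k l + f k l * f i j = δ_{jk} e i l + δ_{li} e k j`. -/

/-- Generators of `U(Q(n))`: `E i j` (even) and `F i j` (odd). -/
inductive QGen (n : ℕ) : Type
  | E : Fin n → Fin n → QGen n
  | F : Fin n → Fin n → QGen n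

/-- Kronecker delta. -/
def kd {n : ℕ} (i j : Fin n) : ℂ := if i = j then 1 else 0

/-- The defining relations of `U(Q(n))`. -/
inductive QRel (n : ℕ) : FreeAlgebra ℂ (QGen n) → FreeAlgebra ℂ (QGen n) → Prop
  | ee (i j k l : Fin n) : QRel n
      (FreeAlgebra.ι ℂ (QGen.E i j) * FreeAlgebra.ι ℂ (QGen.E k l) -
        FreeAlgebra.ι ℂ (QGen.E k l) * FreeAlgebra.ι ℂ (QGen.E i j))
      (kd j k • FreeAlgebra.ι ℂ (QGen.E i l) - kd l i • FreeAlgebra.ι ℂ (QGen.E k j))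
  | ef (i j k l : Fin n) : QRel n
      (FreeAlgebra.ι ℂ (QGen.E i j) * FreeAlgebra.ι ℂ (QGen.F k l) -
        FreeAlgebra.ι ℂ (QGen.F k l) * FreeAlgebra.ι ℂ (QGen.E i j))
      (kd j k • FreeAlgebra.ι ℂ (QGen.F i l) - kd l i • FreeAlgebra.ι ℂ (QGen.F k j))
  | ff (i j k l : Fin n) : QRel n
      (FreeAlgebra.ι ℂ (QGen.F i j) * FreeAlgebra.ι ℂ (QGen.F k l) +
        FreeAlgebra.ι ℂ (QGen.F k l) * FreeAlgebra.ι ℂ (QGen.F i j))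
      (kd j k • FreeAlgebra.ι ℂ (QGen.E i l) + kd l i • FreeAlgebra.ι ℂ (QGen.E k j))

/-- The universal enveloping superalgebra `U(Q(n))`. -/
abbrev UQ (n : ℕ) := RingQuot (QRel n)

/-- The generator `e i j` of `U(Q(n))`. -/
def Ue {n : ℕ} (i j : Fin n) : UQ n :=
  RingQuot.mkAlgHom ℂ (QRel n) (FreeAlgebra.ι ℂ (QGen.E i j))

/-- The generator `f i j` of `U(Q(n))`. -/
def Uf {n : ℕ} (i j : Fin n) : UQ n :=
  RingQuot.mkAlgHom ℂ (QRel n) (FreeAlgebra.ι ℂ (QGen.F i j))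

/-- Sergeev's elements `e_{ij}^{(m)}` and `f_{ij}^{(m)}` of `U(Q(n))`, defined recursively by
`e^{(0)} = δ`, `f^{(0)} = 0`,
`e_{ij}^{(m)} = Σ_k e_{ik} e_{kj}^{(m-1)} + (-1)^{m+1} Σ_k f_{ik} f_{kj}^{(m-1)}`,
`f_{ij}^{(m)} = Σ_k e_{ik} f_{kj}^{(m-1)} + (-1)^{m+1} Σ_k f_{ik} e_{kj}^{(m-1)}`. -/
def efU (n : ℕ) : ℕ → (Fin n → Fin n → UQ n) × (Fin n → Fin n → UQ n)
  | 0 => (fun i j => algebraMap ℂ (UQ n) (kd i j), fun _ _ => 0)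
  | m + 1 =>
      (fun i j => (∑ k, Ue i k * (efU n m).1 k j) +
        (-1 : ℂ) ^ m • ∑ k, Uf i k * (efU n m).2 k j,
       fun i j => (∑ k, Ue i k * (efU n m).2 k j) +
        (-1 : ℂ) ^ m • ∑ k, Uf i k * (efU n m).1 k j)

/-- `e_{ij}^{(m)}`. -/
def eU {n : ℕ} (m : ℕ) (i j : Fin n) : UQ n := (efU n m).1 i j
/-- `f_{ij}^{(m)}`. -/
def fU {n : ℕ} (m : ℕ) (i j : Fin n) : UQ n := (efU n m).2 i j

/-- For `l ∣ n`, the index `l(p-1)+i` of `{1,…,n}` (0-based: block `p`, position `i`). -/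
def bidx {n l : ℕ} (h : l ∣ n) (p : Fin (n / l)) (i : Fin l) : Fin n :=
  ⟨l * p.val + i.val, by
    have h1 : i.val < l := i.isLt
    have h2 : p.val + 1 ≤ n / l := p.isLt
    have h3 : l * (p.val + 1) ≤ l * (n / l) := Nat.mul_le_mul_left l h2
    have h4 : n / l * l ≤ n := Nat.div_mul_le_self n l
    have h5 : l * (p.val + 1) = l * p.val + l := Nat.mul_succ l p.val
    have h6 : l * (n / l) = n / l * l := Nat.mul_comm l (n / l)
    omega⟩

/-! # The character `χ`, the left ideal `I_χ` and the finite W-algebra data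

Here `l ∣ n` and `χ` corresponds to the even nilpotent element of `Q(n)` all of whose
Jordan blocks have size `l`.  The subalgebra `m = ⊕_{j<0} g_j` is spanned by the
elements `e_{l(p-1)+i+k, l(q-1)+i}` and `f_{l(p-1)+i+k, l(q-1)+i}` (`k ≥ 1`), and
`χ(e_{l(p-1)+i+1, l(q-1)+i}) = δ_{pq}` and `χ = 0` on the other basis elements. -/

/-- The set of elements `a - χ(a)` for `a` ranging over the standard basis of `m`;
(rows/columns written 0-based: `a` is the position of the row inside its block `p`,
`b` the position of the column inside its block `q`, with `b < a`). -/
def mSet (n l : ℕ) (h : l ∣ n) : Set (UQ n) :=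
  { x : UQ n | ∃ (p q : Fin (n / l)) (a b : Fin l), b.val < a.val ∧
      (x = Ue (bidx h p a) (bidx h q b) -
            algebraMap ℂ (UQ n) (if a.val = b.val + 1 ∧ p = q then 1 else 0) ∨
       x = Uf (bidx h p a) (bidx h q b)) }

/-- The left ideal `I_χ` of `U(Q(n))` generated by the `a - χ(a)`, `a ∈ m`. -/
def Ichi (n l : ℕ) (h : l ∣ n) : Submodule (UQ n) (UQ n) :=
  Submodule.span (UQ n) (mSet n l h)

/-- The quotient `U(Q(n))/I_χ` (as a `ℂ`-vector space). -/
abbrev Wq (n l : ℕ) (h : l ∣ n) := UQ n ⧸ (Ichi n l h).restrictScalars ℂ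

/-- The quotient map `π : U(Q(n)) → U(Q(n))/I_χ`. -/
def piq (n l : ℕ) (h : l ∣ n) : UQ n →ₗ[ℂ] Wq n l h :=
  ((Ichi n l h).restrictScalars ℂ).mkQ

/-- `y` super-commutes with `m` into `I_χ`:  `[a, y] ∈ I_χ` for every `a` in the standard
basis of `m`.  Here the super-commutator of the odd element `f` with (the possibly
non-homogeneous) `y` is `f * y - σ(y) * f`, where `σ` is the parity involution of
`U(Q(n))` (the algebra automorphism fixing the `e`'s and negating the `f`'s). -/
def Wcond {n l : ℕ} (h : l ∣ n) (σ : UQ n →ₐ[ℂ] UQ n) (y : UQ n) : Prop :=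
  ∀ (p q : Fin (n / l)) (a b : Fin l), b.val < a.val →
    (Ue (bidx h p a) (bidx h q b) * y - y * Ue (bidx h p a) (bidx h q b) ∈ Ichi n l h) ∧
    (Uf (bidx h p a) (bidx h q b) * y - σ y * Uf (bidx h p a) (bidx h q b) ∈ Ichi n l h)

/-- The finite W-algebra `W_χ = {π(y) | [a, y] ∈ I_χ for all a ∈ m}`, as a subset of
`U(Q(n))/I_χ`.  (Its product is `π(y₁)·π(y₂) = π(y₁y₂)`.) -/
def WchiSet (n l : ℕ) (h : l ∣ n) (σ : UQ n →ₐ[ℂ] UQ n) : Set (Wq n l h) :=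
  { w : Wq n l h | ∃ y : UQ n, Wcond h σ y ∧ piq n l h y = w }

/-- The standard basis elements of the parabolic subalgebra `p = ⊕_{j≥0} g_j`. -/
def pSet (n l : ℕ) (h : l ∣ n) : Set (UQ n) :=
  { x : UQ n | ∃ (p q : Fin (n / l)) (a b : Fin l), a.val ≤ b.val ∧
      (x = Ue (bidx h p a) (bidx h q b) ∨ x = Uf (bidx h p a) (bidx h q b)) }

/-- The standard basis elements of the nilradical `n = ⊕_{j>0} g_j` of `p`. -/
def nSet (n l : ℕ) (h : l ∣ n) : Set (UQ n) :=
  { x : UQ n | ∃ (p q : Fin (n / l)) (a b : Fin l), a.val < b.val ∧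
      (x = Ue (bidx h p a) (bidx h q b) ∨ x = Uf (bidx h p a) (bidx h q b)) }

/-- The kernel of the Harish-Chandra projection `ϑ : U(p) → U(g₀)`, realized inside
`U(Q(n))`: the `ℂ`-span of `U(p)·n`.  (By the PBW theorem, `U(g) = U(p) ⊕ I_χ` and
`U(p) = U(g₀) ⊕ U(p)n`, so for `y ∈ U(g)`, `ϑ(pr(y)) = t` iff
`y - t ∈ I_χ + U(p)n`.) -/
def Lspan (n l : ℕ) (h : l ∣ n) : Submodule ℂ (UQ n) :=
  Submodule.span ℂ
    { x : UQ n | ∃ u ∈ Algebra.adjoin ℂ (pSet n l h), ∃ g ∈ nSet n l h, x = u * g }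

/-- A descriptor of a generator of `U(p)`:  `(b, p, q, a, c)` is
`e_{l(p-1)+(a+1), l(q-1)+(c+1)}` if `b = false` and `f_{…}` if `b = true`
(required: `a ≤ c`). -/
def pgElem {n l : ℕ} (h : l ∣ n) :
    Bool × Fin (n / l) × Fin (n / l) × Fin l × Fin l → UQ n
  | (b, p, q, a, c) => (if b then Uf else Ue) (bidx h p a) (bidx h q c)

/-- Kazhdan degree `2k+2` of a `p`-generator of block offset `k = c - a`. -/
def pgDeg {l m : ℕ} (d : Bool × Fin m × Fin m × Fin l × Fin l) : ℕ :=
  2 * (d.2.2.2.2.val - d.2.2.2.1.val) + 2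

/-- Weight `2k` of a `p`-generator of block offset `k = c - a`. -/
def pgWt {l m : ℕ} (d : Bool × Fin m × Fin m × Fin l × Fin l) : ℕ :=
  2 * (d.2.2.2.2.val - d.2.2.2.1.val)

/-- Monomials in the generators of `U(p)` which are "lower" than bidegree
(Kazhdan degree `D`, weight `W`): either of Kazhdan degree `< D`, or of Kazhdan
degree `≤ D` and weight `< W`. -/
def LowSet (n l : ℕ) (h : l ∣ n) (D W : ℕ) : Set (UQ n) :=
  { x : UQ n | ∃ L : List (Bool × Fin (n / l) × Fin (n / l) × Fin l × Fin l),
      (∀ d ∈ L, d.2.2.2.1.val ≤ d.2.2.2.2.val) ∧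
      x = (L.map (pgElem h)).prod ∧
      ((L.map pgDeg).sum < D ∨ ((L.map pgDeg).sum ≤ D ∧ (L.map pgWt).sum < W)) }

/-- The span of the "lower" monomials. -/
def LowSpan (n l : ℕ) (h : l ∣ n) (D W : ℕ) : Submodule ℂ (UQ n) :=
  Submodule.span ℂ (LowSet n l h D W)

/-! # The super tensor power `U(Q(m))^{⊗l}`

Modeled as the superalgebra with generators `x^i_{pq} = 1^{⊗(l-i)} ⊗ e_{pq} ⊗ 1^{⊗(i-1)}`
(even) and `ξ^i_{pq} = 1^{⊗(l-i)} ⊗ f_{pq} ⊗ 1^{⊗(i-1)}` (odd), subject to the `U(Q(m))`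
relations in each tensor slot and to (super-)commutation between different slots. -/

/-- Generators of `U(Q(m))^{⊗l}`: `X i p q` is `x^i_{pq}` and `Xi i p q` is `ξ^i_{pq}`
(`i : Fin l` is the 0-based tensor slot, counted from the right). -/
inductive TGen (m l : ℕ) : Type
  | X : Fin l → Fin m → Fin m → TGen m l
  | Xi : Fin l → Fin m → Fin m → TGen m l

/-- Kronecker delta on slots. -/
def kdl {l : ℕ} (i j : Fin l) : ℂ := if i = j then 1 else 0

/-- The defining relations of `U(Q(m))^{⊗l}`. -/
inductive TRel (m l : ℕ) : FreeAlgebra ℂ (TGen m l) → FreeAlgebra ℂ (TGen m l) → Prop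
  | xx (i i' : Fin l) (p q r s : Fin m) : TRel m l
      (FreeAlgebra.ι ℂ (TGen.X i p q) * FreeAlgebra.ι ℂ (TGen.X i' r s) -
        FreeAlgebra.ι ℂ (TGen.X i' r s) * FreeAlgebra.ι ℂ (TGen.X i p q))
      ((kdl i i' * kd q r) • FreeAlgebra.ι ℂ (TGen.X i p s) -
        (kdl i i' * kd s p) • FreeAlgebra.ι ℂ (TGen.X i' r q))
  | xxi (i i' : Fin l) (p q r s : Fin m) : TRel m l
      (FreeAlgebra.ι ℂ (TGen.X i p q) * FreeAlgebra.ι ℂ (TGen.Xi i' r s) -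
        FreeAlgebra.ι ℂ (TGen.Xi i' r s) * FreeAlgebra.ι ℂ (TGen.X i p q))
      ((kdl i i' * kd q r) • FreeAlgebra.ι ℂ (TGen.Xi i p s) -
        (kdl i i' * kd s p) • FreeAlgebra.ι ℂ (TGen.Xi i' r q))
  | xixi (i i' : Fin l) (p q r s : Fin m) : TRel m l
      (FreeAlgebra.ι ℂ (TGen.Xi i p q) * FreeAlgebra.ι ℂ (TGen.Xi i' r s) +
        FreeAlgebra.ι ℂ (TGen.Xi i' r s) * FreeAlgebra.ι ℂ (TGen.Xi i p q))
      ((kdl i i' * kd q r) • FreeAlgebra.ι ℂ (TGen.X i p s) +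
        (kdl i i' * kd s p) • FreeAlgebra.ι ℂ (TGen.X i' r q))

/-- The superalgebra `U(Q(m))^{⊗l}`. -/
abbrev TQ (m l : ℕ) := RingQuot (TRel m l)

/-- `x^i_{pq} := 1^{⊗(l-i)} ⊗ e_{pq} ⊗ 1^{⊗(i-1)} ∈ U(Q(m))^{⊗l}`. -/
def xT {m l : ℕ} (i : Fin l) (p q : Fin m) : TQ m l :=
  RingQuot.mkAlgHom ℂ (TRel m l) (FreeAlgebra.ι ℂ (TGen.X i p q))

/-- `ξ^i_{pq} := 1^{⊗(l-i)} ⊗ f_{pq} ⊗ 1^{⊗(i-1)} ∈ U(Q(m))^{⊗l}`. -/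
def xiT {m l : ℕ} (i : Fin l) (p q : Fin m) : TQ m l :=
  RingQuot.mkAlgHom ℂ (TRel m l) (FreeAlgebra.ι ℂ (TGen.Xi i p q))

/-! # The super-Yangian `Y(Q(n))` -/

/-- The index set `{±1, …, ±n}`:  `(false, a)` is the positive index `a` (even),
`(true, a)` is the negative index `-a` (odd). -/
abbrev QIdx (n : ℕ) := Bool × Fin n

/-- Negation `i ↦ -i` on indices. -/
def qneg {n : ℕ} (i : QIdx n) : QIdx n := (!i.1, i.2)

/-- The parity `p(i)`: `0` for positive `i`, `1` for negative `i`. -/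
def qpar {n : ℕ} (i : QIdx n) : ℕ := if i.1 then 1 else 0

/-- Kronecker delta on `{±1, …, ±n}`. -/
def kdq {n : ℕ} (i j : QIdx n) : ℂ := if i = j then 1 else 0

/-- Generators of `Y(Q(n))`: `T m i j` encodes `T^{(m+1)}_{i,j}`. -/
inductive YGen (n : ℕ) : Type
  | T : ℕ → QIdx n → QIdx n → YGen n

/-- `T^{(m)}_{i,j}` in the free algebra, with `T^{(0)}_{i,j} = δ_{ij}`. -/
def Tf {n : ℕ} : ℕ → QIdx n → QIdx n → FreeAlgebra ℂ (YGen n)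
  | 0, i, j => algebraMap ℂ _ (kdq i j)
  | m + 1, i, j => FreeAlgebra.ι ℂ (YGen.T m i j)

/-- The super-commutator `[T^{(a)}_{i,j}, T^{(b)}_{k,l}]` in the free algebra. -/
def ybr {n : ℕ} (a : ℕ) (i j : QIdx n) (b : ℕ) (k l : QIdx n) :
    FreeAlgebra ℂ (YGen n) :=
  Tf a i j * Tf b k l -
    ((-1 : ℂ) ^ ((qpar i + qpar j) * (qpar k + qpar l))) • (Tf b k l * Tf a i j)

/-- The defining relations of the super-Yangian `Y(Q(n))`: for `M, R ≥ 1`,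
`(-1)^{p(i)p(k)+p(i)p(l)+p(k)p(l)} ([T^{(M+1)}_{ij}, T^{(R-1)}_{kl}] - [T^{(M-1)}_{ij}, T^{(R+1)}_{kl}])
 = T^{(M)}_{kj}T^{(R-1)}_{il} + T^{(M-1)}_{kj}T^{(R)}_{il} - T^{(R-1)}_{kj}T^{(M)}_{il}
   - T^{(R)}_{kj}T^{(M-1)}_{il}
   + (-1)^{p(k)+p(l)} (-T^{(M)}_{-k,j}T^{(R-1)}_{-i,l} + T^{(M-1)}_{-k,j}T^{(R)}_{-i,l}
       + T^{(R-1)}_{k,-j}T^{(M)}_{i,-l} - T^{(R)}_{k,-j}T^{(M-1)}_{i,-l})`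
(here `M = m+1`, `R = r+1`), together with `T^{(m)}_{-i,-j} = (-1)^m T^{(m)}_{i,j}`. -/
inductive YRel (n : ℕ) : FreeAlgebra ℂ (YGen n) → FreeAlgebra ℂ (YGen n) → Prop
  | quad (m r : ℕ) (i j k l : QIdx n) : YRel n
      (((-1 : ℂ) ^ (qpar i * qpar k + qpar i * qpar l + qpar k * qpar l)) •
        (ybr (m + 2) i j r k l - ybr m i j (r + 2) k l))
      (Tf (m + 1) k j * Tf r i l + Tf m k j * Tf (r + 1) i l -
        Tf r k j * Tf (m + 1) i l - Tf (r + 1) k j * Tf m i l +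
        ((-1 : ℂ) ^ (qpar k + qpar l)) •
          (-(Tf (m + 1) (qneg k) j * Tf r (qneg i) l) +
            Tf m (qneg k) j * Tf (r + 1) (qneg i) l +
            Tf r k (qneg j) * Tf (m + 1) i (qneg l) -
            Tf (r + 1) k (qneg j) * Tf m i (qneg l)))
  | par (m : ℕ) (i j : QIdx n) : YRel n
      (Tf (m + 1) (qneg i) (qneg j)) (((-1 : ℂ) ^ (m + 1)) • Tf (m + 1) i j)

/-- The super-Yangian `Y(Q(n))`. -/
abbrev YQ (n : ℕ) := RingQuot (YRel n)

/-- The generator `T^{(m)}_{i,j}` of `Y(Q(n))` (with `T^{(0)}_{i,j} = δ_{ij}`). -/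
def TY {n : ℕ} (m : ℕ) (i j : QIdx n) : YQ n :=
  RingQuot.mkAlgHom ℂ (YRel n) (Tf m i j)

/-! # Values of the homomorphisms `U`, `ev`, `ēv` on the generators of `Y(Q(n))`,
and the explicit sums appearing in the main theorems. -/

/-- The value of the homomorphism `U : Y(Q(n)) → U(Q(n))` on the generator
`T^{(r)}_{i,j}`:  `U(T^{(r)}_{i,j}) = (-1)^r e^{(r)}_{j,i}`,
`U(T^{(r)}_{-i,j}) = (-1)^r f^{(r)}_{j,i}` for `i, j > 0`, and the values on the other
generators are forced by `T^{(r)}_{-i,-j} = (-1)^r T^{(r)}_{i,j}`. -/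
def Uval {n : ℕ} (r : ℕ) (i j : QIdx n) : UQ n :=
  (if j.1 then (-1 : ℂ) ^ r else 1) •
    ((-1 : ℂ) ^ r • (if xor i.1 j.1 then fU r j.2 i.2 else eU r j.2 i.2))

/-- The value of the evaluation homomorphism `ev : Y(Q(n)) → U(Q(n))` on `T^{(r)}_{i,j}`:
`ev(T^{(1)}_{i,j}) = -e_{j,i}`, `ev(T^{(1)}_{-i,j}) = -f_{j,i}` for `i, j > 0`,
`ev(T^{(0)}_{i,j}) = δ_{ij}` and `ev(T^{(r)}_{i,j}) = 0` for `r > 1` (with the values on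
the remaining generators forced by `T^{(r)}_{-i,-j} = (-1)^r T^{(r)}_{i,j}`). -/
def evval {n : ℕ} (r : ℕ) (i j : QIdx n) : UQ n :=
  (if j.1 then (-1 : ℂ) ^ r else 1) •
    (match r with
      | 0 => if xor i.1 j.1 then 0 else algebraMap ℂ (UQ n) (kd i.2 j.2)
      | 1 => -(if xor i.1 j.1 then Uf j.2 i.2 else Ue j.2 i.2)
      | _ + 2 => 0)

/-- The value of `ēv = α ∘ ev : Y(Q(n)) → U(Q(n))` on `T^{(r)}_{i,j}`, where `α` is the
principal anti-automorphism of `U(Q(n))`:  `ēv(T^{(1)}_{i,j}) = e_{j,i}`,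
`ēv(T^{(1)}_{-i,j}) = f_{j,i}` for `i, j > 0`, `ēv(T^{(0)}_{i,j}) = δ_{ij}`,
`ēv(T^{(r)}_{i,j}) = 0` for `r > 1`. -/
def bevval {n : ℕ} (r : ℕ) (i j : QIdx n) : UQ n :=
  (if j.1 then (-1 : ℂ) ^ r else 1) •
    (match r with
      | 0 => if xor i.1 j.1 then 0 else algebraMap ℂ (UQ n) (kd i.2 j.2)
      | 1 => (if xor i.1 j.1 then Uf j.2 i.2 else Ue j.2 i.2)
      | _ + 2 => 0)

/-- The sum `Σ_{p_1,…,p_{r-1}} Σ_{l ≥ i_1 ≥ i_2 ≥ … ≥ i_r ≥ 1}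
Π_{a=1}^r (x^{i_a}_{p_{a-1},p_a} + (-1)^{r-a} ξ^{i_a}_{p_{a-1},p_a})`
(with `p_0 = p`, `p_r = q`), an element of `U(Q(m))^{⊗l}`. -/
def chainProdDec (m l : ℕ) (r : ℕ) (p q : Fin m) : TQ m l :=
  ∑ c : Fin (r + 1) → Fin m, ∑ iv : Fin r → Fin l,
    (if c 0 = p ∧ c (Fin.last r) = q ∧ (∀ a b : Fin r, a ≤ b → iv b ≤ iv a)
      then (1 : ℂ) else 0) •
      (List.ofFn fun a : Fin r =>
        xT (iv a) (c a.castSucc) (c a.succ) +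
          ((-1 : ℂ) ^ (r - 1 - a.val)) • xiT (iv a) (c a.castSucc) (c a.succ)).prod

/-- The sum `Σ_{p_1,…,p_{r-1}} Σ_{1 ≤ i_1 < i_2 < … < i_r ≤ l}
Π_{a=1}^r (x^{i_a}_{p_{a-1},p_a} + (-1)^{r-a} ξ^{i_a}_{p_{a-1},p_a})`
(with `p_0 = p`, `p_r = q`), an element of `U(Q(m))^{⊗l}`. -/
def chainProdInc (m l : ℕ) (r : ℕ) (p q : Fin m) : TQ m l :=
  ∑ c : Fin (r + 1) → Fin m, ∑ iv : Fin r → Fin l,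
    (if c 0 = p ∧ c (Fin.last r) = q ∧ (∀ a b : Fin r, a < b → iv a < iv b)
      then (1 : ℂ) else 0) •
      (List.ofFn fun a : Fin r =>
        xT (iv a) (c a.castSucc) (c a.succ) +
          ((-1 : ℂ) ^ (r - 1 - a.val)) • xiT (iv a) (c a.castSucc) (c a.succ)).prod

/-- The elements `z^{(r)}_{±q,p}` of `U(Q(m))^{⊗l}`:  the even (`sgn = false`,
giving `z^{(r)}_{q,p}`) resp. odd (`sgn = true`, giving `z^{(r)}_{-q,p}`) component of
`chainProdDec`, computed using the parity involution `σT` of `U(Q(m))^{⊗l}`;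
`z^{(0)}_{q,p} = δ_{qp}`, `z^{(0)}_{-q,p} = 0`. -/
def zDec {m l : ℕ} (σT : TQ m l →ₐ[ℂ] TQ m l) :
    ℕ → Bool → Fin m → Fin m → TQ m l
  | 0, sgn, q, p => if sgn then 0 else algebraMap ℂ (TQ m l) (kd q p)
  | r + 1, sgn, q, p =>
      (2⁻¹ : ℂ) • (chainProdDec m l (r + 1) p q +
        (if sgn then (-1 : ℂ) else 1) • σT (chainProdDec m l (r + 1) p q))

/-- The elements `z̃^{(r)}_{±q,p}` of `U(Q(m))^{⊗l}` (as `zDec`, with increasing chains). -/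
def zInc {m l : ℕ} (σT : TQ m l →ₐ[ℂ] TQ m l) :
    ℕ → Bool → Fin m → Fin m → TQ m l
  | 0, sgn, q, p => if sgn then 0 else algebraMap ℂ (TQ m l) (kd q p)
  | r + 1, sgn, q, p =>
      (2⁻¹ : ℂ) • (chainProdInc m l (r + 1) p q +
        (if sgn then (-1 : ℂ) else 1) • σT (chainProdInc m l (r + 1) p q))

/-- The explicit formula for the antipode value `S(T^{(r)}_{i,j})` (`r ≥ 1`):
`S(T^{(r)}_{i,j}) = Σ_{m=1}^{r} (-1)^m Σ_{i_1,…,i_{m-1}} Σ_{r_1+⋯+r_m=r, r_a>0}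
(-1)^{ν(i,i_1,…,i_{m-1},j)} T^{(r_1)}_{i,i_1} ⋯ T^{(r_m)}_{i_{m-1},j}` where
`ν(i_0,…,i_m) = Σ_{0≤k<s≤m-1} (p(i_k)+p(i_{k+1}))(p(i_s)+p(i_{s+1}))`. -/
def STval {n : ℕ} (r : ℕ) (i j : QIdx n) : YQ n :=
  ∑ m : Fin r,
    ((-1 : ℂ) ^ (m.val + 1)) •
      ∑ ch : Fin (m.val + 2) → QIdx n, ∑ c : Fin (m.val + 1) → Fin (r + 1),
        (if ch 0 = i ∧ ch (Fin.last (m.val + 1)) = j ∧ (∀ a, 1 ≤ (c a).val) ∧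
              (∑ a, (c a).val) = r
          then ((-1 : ℂ) ^ (∑ a : Fin (m.val + 1), ∑ b : Fin (m.val + 1),
              if a < b then
                (qpar (ch a.castSucc) + qpar (ch a.succ)) *
                  (qpar (ch b.castSucc) + qpar (ch b.succ))
              else 0))
          else 0) •
        (List.ofFn fun a : Fin (m.val + 1) =>
          TY (c a).val (ch a.castSucc) (ch a.succ)).prod

/-! Let `G_k = ev^{⊗k} ∘ Δ_k`. Since `ev` kills `T^{(r)}` for `r > 1`, splitting off the rightmost
tensor factor of `Δ_{k+1}` expresses `G_{k+1}(T^{(s+1)})` through `G_k(T^{(s+1)})` and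
`G_k(T^{(s)})`. The new factor supercommutes with the other slots, so it can be moved to the left;
the sign which this costs, together with `T_{-i,-j}^{(s)} = (-1)^s T_{i,j}^{(s)}`, turns it into
`x^1 + (-1)^s ξ^1`. In matrix form this is the recursion satisfied by the sums over increasing
chains, according to whether or not a chain starts at the smallest slot. As `G_k(T_{i,j})` has
parity `p(i) + p(j)`, the even and odd components of the sum are the two values in question. -/

lemma strictMono_succ_comp_iff {α : Type*} [Preorder α] {k : ℕ} {f : α → Fin k} :
    StrictMono (Fin.succ ∘ f) ↔ StrictMono f := by
  simp [StrictMono]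

lemma strictMono_cons_zero_succ_comp_iff {r k : ℕ} {f : Fin r → Fin k} :
    StrictMono (Fin.cons 0 (Fin.succ ∘ f) : Fin (r + 1) → Fin (k + 1)) ↔ StrictMono f := by
  simp [StrictMono, Fin.forall_fin_succ]

lemma strictMono_fin_succ_iff {r k : ℕ} {iv : Fin (r + 1) → Fin (k + 1)} :
    StrictMono iv ↔ (∃ jv : Fin (r + 1) → Fin k, StrictMono jv ∧ Fin.succ ∘ jv = iv) ∨
      ∃ jv : Fin r → Fin k, StrictMono jv ∧ Fin.cons 0 (Fin.succ ∘ jv) = iv := by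
  constructor
  · intro hiv
    have succ_ne_zero (a : Fin r) : iv a.succ ≠ 0 := (hiv a.succ_pos).ne_bot
    by_cases h0 : iv 0 = 0
    · obtain ⟨jv, rfl⟩ : ∃ jv : Fin r → Fin k, Fin.cons 0 (Fin.succ ∘ jv) = iv := by
        refine ⟨fun a => (iv a.succ).pred (succ_ne_zero a), funext fun a => ?_⟩
        cases a using Fin.cases <;> simp [h0]
      exact .inr ⟨jv, strictMono_cons_zero_succ_comp_iff.1 hiv, rfl⟩
    · obtain ⟨jv, rfl⟩ : ∃ jv : Fin (r + 1) → Fin k, Fin.succ ∘ jv = iv :=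
        ⟨fun a => (iv a).pred (Fin.cases h0 succ_ne_zero a), funext fun a => by simp⟩
      exact .inl ⟨jv, strictMono_succ_comp_iff.1 hiv, rfl⟩
  · rintro (⟨jv, hjv, rfl⟩ | ⟨jv, hjv, rfl⟩)
    exacts [strictMono_succ_comp_iff.2 hjv, strictMono_cons_zero_succ_comp_iff.2 hjv]

lemma sum_strictMono_fin_succ {M : Type*} [AddCommMonoid M] {r k : ℕ}
    (f : (Fin (r + 1) → Fin (k + 1)) → M) :
    ∑ iv with StrictMono iv, f iv =
      ∑ jv : Fin (r + 1) → Fin k with StrictMono jv, f (Fin.succ ∘ jv) +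
        ∑ jv : Fin r → Fin k with StrictMono jv, f (Fin.cons 0 (Fin.succ ∘ jv)) := by
  have succ_comp_injective (a : ℕ) :
      Function.Injective fun jv : Fin a → Fin k => Fin.succ ∘ jv :=
    (Fin.succ_injective k).comp_left
  have filter_eq_union : ({iv | StrictMono iv} : Finset (Fin (r + 1) → Fin (k + 1))) =
      ({jv | StrictMono jv} : Finset (Fin (r + 1) → Fin k)).image (Fin.succ ∘ ·) ∪
        ({jv | StrictMono jv} : Finset (Fin r → Fin k)).image
          (fun jv => Fin.cons 0 (Fin.succ ∘ jv)) := by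
    ext iv; simp [strictMono_fin_succ_iff]
  have cons_injective :
      Function.Injective fun jv : Fin r → Fin k => (Fin.cons 0 (Fin.succ ∘ jv) : _ → Fin (k + 1)) :=
    (Fin.cons_right_injective _).comp (succ_comp_injective _)
  rw [filter_eq_union, Finset.sum_union, Finset.sum_image (succ_comp_injective _).injOn,
    Finset.sum_image cons_injective.injOn]
  simp only [Finset.disjoint_left, Finset.mem_image, not_exists, not_and]
  rintro _ ⟨jv, -, rfl⟩ jv' - h
  exact Fin.succ_ne_zero _ (congrFun h 0).symm

/-- The sum of the ordered products `L (r-1) i_1 * ⋯ * L 0 i_r` over all `i_1 < ⋯ < i_r`: a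
noncommutative elementary symmetric sum whose factors also depend on their distance from the right
end of the product. -/
def strictChainSum {R : Type*} [Semiring R] {l : ℕ} (L : ℕ → Fin l → R) (r : ℕ) : R :=
  ∑ iv : Fin r → Fin l with StrictMono iv, (List.ofFn fun a => L (r - 1 - a) (iv a)).prod

section strictChainSum

variable {R : Type*} [Semiring R] {l : ℕ}

lemma strictChainSum_zero (L : ℕ → Fin l → R) : strictChainSum L 0 = 1 := by
  have strictMono_of_isEmpty (iv : Fin 0 → Fin l) : StrictMono iv := Subsingleton.strictMono iv
  simp [strictChainSum, strictMono_of_isEmpty]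

lemma strictChainSum_eq_zero_of_lt (L : ℕ → Fin l → R) {r : ℕ} (h : l < r) :
    strictChainSum L r = 0 := by
  have not_strictMono (iv : Fin r → Fin l) : ¬StrictMono iv := fun hiv =>
    h.not_ge (by simpa using Fintype.card_le_of_injective iv hiv.injective)
  simp [strictChainSum, not_strictMono]

lemma strictChainSum_succ (L : ℕ → Fin (l + 1) → R) (r : ℕ) :
    strictChainSum L (r + 1) = strictChainSum (fun k i => L k i.succ) (r + 1) +
      L r 0 * strictChainSum (fun k i => L k i.succ) r := by
  have sub_succ (a : Fin r) : r - (a + 1) = r - 1 - a := by lia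
  simp [strictChainSum, sum_strictMono_fin_succ, List.ofFn_succ, Finset.mul_sum, sub_succ]

lemma map_strictChainSum {S F : Type*} [Semiring S] [FunLike F R S] [RingHomClass F R S] (φ : F)
    (L : ℕ → Fin l → R) (r : ℕ) :
    φ (strictChainSum L r) = strictChainSum (fun k i => φ (L k i)) r := by
  simp [strictChainSum, map_list_prod, List.map_ofFn, Function.comp_def]

end strictChainSum

lemma matrix_prod_ofFn_apply {ι R : Type*} [Fintype ι] [DecidableEq ι] [Semiring R] {r : ℕ}
    (A : Fin r → Matrix ι ι R) (p q : ι) :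
    (List.ofFn A).prod p q = ∑ c : Fin (r + 1) → ι with c 0 = p ∧ c (Fin.last r) = q,
      (List.ofFn fun a : Fin r => A a (c a.castSucc) (c a.succ)).prod := by
  simp only [Finset.sum_filter]
  induction r generalizing p with
  | zero =>
    rw [← (Equiv.funUnique (Fin 1) ι).symm.sum_comp]
    simp [Matrix.one_apply, ite_and]
  | succ r ih =>
    rw [← (Fin.consEquiv fun _ : Fin (r + 2) => ι).sum_comp, Fintype.sum_prod_type]
    simp only [List.ofFn_succ, List.prod_cons, Matrix.mul_apply, ih, Finset.mul_sum, ite_and]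
    rw [Finset.sum_comm]
    simp [← Fin.succ_last]

namespace TQ

variable {m k l : ℕ}

lemma xT_mul_xT_sub (i i' : Fin l) (p q r s : Fin m) :
    xT i p q * xT i' r s - xT i' r s * xT i p q =
      (kdl i i' * kd q r) • xT i p s - (kdl i i' * kd s p) • xT i' r q := by
  simpa only [map_sub, map_mul, map_smul, xT]
    using RingQuot.mkAlgHom_rel ℂ (TRel.xx i i' p q r s)

lemma xT_mul_xiT_sub (i i' : Fin l) (p q r s : Fin m) :
    xT i p q * xiT i' r s - xiT i' r s * xT i p q =
      (kdl i i' * kd q r) • xiT i p s - (kdl i i' * kd s p) • xiT i' r q := by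
  simpa only [map_sub, map_mul, map_smul, xT, xiT]
    using RingQuot.mkAlgHom_rel ℂ (TRel.xxi i i' p q r s)

lemma xiT_mul_xiT_add (i i' : Fin l) (p q r s : Fin m) :
    xiT i p q * xiT i' r s + xiT i' r s * xiT i p q =
      (kdl i i' * kd q r) • xT i p s + (kdl i i' * kd s p) • xT i' r q := by
  simpa only [map_add, map_mul, map_smul, xT, xiT]
    using RingQuot.mkAlgHom_rel ℂ (TRel.xixi i i' p q r s)

lemma algHom_ext {A : Type*} [Semiring A] [Algebra ℂ A] {φ ψ : TQ m l →ₐ[ℂ] A}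
    (hx : ∀ i p q, φ (xT i p q) = ψ (xT i p q))
    (hxi : ∀ i p q, φ (xiT i p q) = ψ (xiT i p q)) : φ = ψ := by
  refine RingQuot.ringQuot_ext' _ _ _ (FreeAlgebra.hom_ext (funext ?_))
  rintro (⟨i, p, q⟩ | ⟨i, p, q⟩)
  exacts [hx i p q, hxi i p q]

@[elab_as_elim]
lemma induction {C : TQ m l → Prop} (algebraMap : ∀ c, C (algebraMap ℂ _ c))
    (xT : ∀ i p q, C (xT i p q)) (xiT : ∀ i p q, C (xiT i p q))
    (add : ∀ y z, C y → C z → C (y + z)) (mul : ∀ y z, C y → C z → C (y * z)) (y : TQ m l) :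
    C y := by
  obtain ⟨y, rfl⟩ := RingQuot.mkAlgHom_surjective ℂ (TRel m l) y
  induction y using FreeAlgebra.induction with
  | grade0 c => simpa using algebraMap c
  | grade1 g => cases g; exacts [xT _ _ _, xiT _ _ _]
  | mul y z hy hz => simpa using mul _ _ hy hz
  | add y z hy hz => simpa using add _ _ hy hz

/-- The universal property of `U(Q(m))^{⊗l}`: elements `x i p q`, `ξ i p q` of an algebra `A`
satisfying the defining relations determine an algebra homomorphism to `A`. -/
def lift {A : Type*} [Ring A] [Algebra ℂ A] (x ξ : Fin l → Fin m → Fin m → A)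
    (hxx : ∀ i i' p q r s, x i p q * x i' r s - x i' r s * x i p q =
      (kdl i i' * kd q r) • x i p s - (kdl i i' * kd s p) • x i' r q)
    (hxξ : ∀ i i' p q r s, x i p q * ξ i' r s - ξ i' r s * x i p q =
      (kdl i i' * kd q r) • ξ i p s - (kdl i i' * kd s p) • ξ i' r q)
    (hξξ : ∀ i i' p q r s, ξ i p q * ξ i' r s + ξ i' r s * ξ i p q =
      (kdl i i' * kd q r) • x i p s + (kdl i i' * kd s p) • x i' r q) :
    TQ m l →ₐ[ℂ] A :=
  RingQuot.liftAlgHom ℂ ⟨FreeAlgebra.lift ℂ fun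
    | .X i p q => x i p q
    | .Xi i p q => ξ i p q, by
    rintro _ _ (⟨i, i', p, q, r, s⟩ | ⟨i, i', p, q, r, s⟩ | ⟨i, i', p, q, r, s⟩)
    · simpa using hxx i i' p q r s
    · simpa using hxξ i i' p q r s
    · simpa using hξξ i i' p q r s⟩

/-- The parity involution of `U(Q(m))^{⊗l}`, equal to `1` on the even and to `-1` on the odd
component. -/
def parity (m l : ℕ) : TQ m l →ₐ[ℂ] TQ m l :=
  lift xT (fun i p q => (-1 : ℂ) • xiT i p q) xT_mul_xT_sub
    (fun i i' p q r s => by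
      simp only [mul_smul_comm, smul_mul_assoc, smul_comm _ (-1 : ℂ)]
      linear_combination (norm := module) (-1 : ℂ) • xT_mul_xiT_sub i i' p q r s)
    (fun i i' p q r s => by
      simp only [smul_mul_smul_comm, neg_mul_neg, one_mul, one_smul, xiT_mul_xiT_add])

@[simp] lemma parity_xT (i : Fin l) (p q : Fin m) : parity m l (xT i p q) = xT i p q := by
  simp [parity, lift, xT]

@[simp] lemma parity_xiT (i : Fin l) (p q : Fin m) :
    parity m l (xiT i p q) = (-1 : ℂ) • xiT i p q := by
  simp [parity, lift, xiT]

lemma kdl_embedding (g : Fin k ↪ Fin l) (i i' : Fin k) : kdl (g i) (g i') = kdl i i' := by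
  simp [kdl]

/-- The homomorphism `U(Q(m))^{⊗k} → U(Q(m))^{⊗l}` sending slot `i` to slot `g i` and inserting
`1` in the slots outside the range of `g`. -/
def mapSlots (g : Fin k ↪ Fin l) : TQ m k →ₐ[ℂ] TQ m l :=
  lift (fun i => xT (g i)) (fun i => xiT (g i))
    (fun i i' p q r s => by simp only [← kdl_embedding g, xT_mul_xT_sub])
    (fun i i' p q r s => by simp only [← kdl_embedding g, xT_mul_xiT_sub])
    (fun i i' p q r s => by simp only [← kdl_embedding g, xiT_mul_xiT_add])

@[simp] lemma mapSlots_xT (g : Fin k ↪ Fin l) (i : Fin k) (p q : Fin m) :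
    mapSlots g (xT i p q) = xT (g i) p q := by
  simp [mapSlots, lift, xT]

@[simp] lemma mapSlots_xiT (g : Fin k ↪ Fin l) (i : Fin k) (p q : Fin m) :
    mapSlots g (xiT i p q) = xiT (g i) p q := by
  simp [mapSlots, lift, xiT]

lemma parity_mapSlots (g : Fin k ↪ Fin l) (y : TQ m k) :
    parity m l (mapSlots g y) = mapSlots g (parity m k y) := by
  have comp_eq : (parity m l).comp (mapSlots g) = (mapSlots g).comp (parity m k) :=
    algHom_ext (by simp) (by simp)
  exact DFunLike.congr_fun comp_eq y

/-- The homomorphism `U(Q(m)) → U(Q(m))^{⊗l}` onto the tensor slot `i`. -/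
def slot (i : Fin l) : UQ m →ₐ[ℂ] TQ m l :=
  RingQuot.liftAlgHom ℂ ⟨FreeAlgebra.lift ℂ fun
    | .E p q => xT i p q
    | .F p q => xiT i p q, by
    rintro _ _ (⟨p, q, r, s⟩ | ⟨p, q, r, s⟩ | ⟨p, q, r, s⟩)
    · simpa [kdl] using xT_mul_xT_sub i i p q r s
    · simpa [kdl] using xT_mul_xiT_sub i i p q r s
    · simpa [kdl] using xiT_mul_xiT_add i i p q r s⟩

@[simp] lemma slot_Ue (i : Fin l) (p q : Fin m) : slot i (Ue p q) = xT i p q := by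
  simp [slot, Ue]

@[simp] lemma slot_Uf (i : Fin l) (p q : Fin m) : slot i (Uf p q) = xiT i p q := by
  simp [slot, Uf]

variable {i i' : Fin l} (p q r s : Fin m)

lemma xT_commute_xT (h : i ≠ i') : Commute (xT i p q) (xT i' r s) :=
  sub_eq_zero.1 (by simp [xT_mul_xT_sub, kdl, h])

lemma xT_commute_xiT (h : i ≠ i') : Commute (xT i p q) (xiT i' r s) :=
  sub_eq_zero.1 (by simp [xT_mul_xiT_sub, kdl, h])

lemma xiT_mul_xiT_of_ne (h : i ≠ i') :
    xiT i p q * xiT i' r s = xiT i' r s * ((-1 : ℂ) • xiT i p q) := by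
  have anticomm : xiT i p q * xiT i' r s + xiT i' r s * xiT i p q = 0 := by
    simp [xiT_mul_xiT_add, kdl, h]
  rw [mul_smul_comm, neg_one_smul ℂ (xiT i' r s * xiT i p q)]
  exact eq_neg_of_add_eq_zero_left anticomm

lemma mapSlots_mul_xT (g : Fin k ↪ Fin l) (hi : i ∉ Set.range g) (y : TQ m k) :
    mapSlots g y * xT i p q = xT i p q * mapSlots g y := by
  have ne (j : Fin k) : g j ≠ i := fun h => hi ⟨j, h⟩
  change Commute _ _
  induction y using induction with
  | algebraMap c => simpa using Algebra.commute_algebraMap_left c _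
  | xT j r s => simpa using xT_commute_xT r s p q (ne j)
  | xiT j r s => simpa using (xT_commute_xiT p q r s (ne j).symm).symm
  | add y z hy hz => simpa using hy.add_left hz
  | mul y z hy hz => simpa using hy.mul_left hz

lemma mapSlots_mul_xiT (g : Fin k ↪ Fin l) (hi : i ∉ Set.range g) (y : TQ m k) :
    mapSlots g y * xiT i p q = xiT i p q * mapSlots g (parity m k y) := by
  have ne (j : Fin k) : g j ≠ i := fun h => hi ⟨j, h⟩
  induction y using induction with
  | algebraMap c => simpa using Algebra.commutes c _
  | xT j r s => simpa using (xT_commute_xiT r s p q (ne j)).eq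
  | xiT j r s => simpa using xiT_mul_xiT_of_ne r s p q (ne j)
  | add y z hy hz => simp only [map_add, add_mul, mul_add, hy, hz]
  | mul y z hy hz => rw [map_mul, mul_assoc, hz, ← mul_assoc, hy, mul_assoc, map_mul, map_mul]

end TQ

lemma UQ.algHom_ext {n : ℕ} {A : Type*} [Semiring A] [Algebra ℂ A] {φ ψ : UQ n →ₐ[ℂ] A}
    (he : ∀ i j, φ (Ue i j) = ψ (Ue i j)) (hf : ∀ i j, φ (Uf i j) = ψ (Uf i j)) : φ = ψ := by
  refine RingQuot.ringQuot_ext' _ _ _ (FreeAlgebra.hom_ext (funext ?_))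
  rintro (⟨i, j⟩ | ⟨i, j⟩)
  exacts [he i j, hf i j]

section Yangian

variable {n : ℕ}

lemma TY_zero (i j : QIdx n) : TY 0 i j = algebraMap ℂ (YQ n) (kdq i j) := by
  simp [TY, Tf]

lemma TY_qneg (s : ℕ) (i j : QIdx n) : TY s (qneg i) (qneg j) = (-1 : ℂ) ^ s • TY s i j := by
  cases s with
  | zero => simp [TY_zero, kdq, qneg, Prod.ext_iff]
  | succ s => simpa [TY] using RingQuot.mkAlgHom_rel ℂ (YRel.par s i j)

lemma evval_zero (i j : QIdx n) : evval 0 i j = algebraMap ℂ (UQ n) (kdq i j) := by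
  obtain ⟨b, i⟩ := i
  obtain ⟨c, j⟩ := j
  cases b <;> cases c <;> simp [evval, kdq, kd]

lemma evval_add_two (s : ℕ) (i j : QIdx n) : evval (s + 2) i j = 0 := by
  simp [evval]

lemma evval_one (i j : QIdx n) :
    evval 1 i j = (-1 : ℂ) ^ (qpar j + 1) • if xor i.1 j.1 then Uf j.2 i.2 else Ue j.2 i.2 := by
  obtain ⟨b, i⟩ := i
  obtain ⟨c, j⟩ := j
  cases b <;> cases c <;> simp only [evval, qpar, Bool.xor_false, Bool.xor_true, Bool.not_true,
    Bool.not_false, Bool.false_eq_true, if_true, if_false] <;> module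

lemma slot_evval_one {l : ℕ} (a : Fin l) (i j : QIdx n) :
    TQ.slot a (evval 1 i j) =
      (-1 : ℂ) ^ (qpar j + 1) • if xor i.1 j.1 then xiT a j.2 i.2 else xT a j.2 i.2 := by
  rw [evval_one, map_smul, apply_ite (TQ.slot a), TQ.slot_Uf, TQ.slot_Ue]

lemma parity_slot_evval {l : ℕ} (a : Fin l) (s : ℕ) (i j : QIdx n) :
    TQ.parity n l (TQ.slot a (evval s i j)) =
      (-1 : ℂ) ^ (qpar i + qpar j) • TQ.slot a (evval s i j) := by
  obtain ⟨b, i⟩ := i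
  obtain ⟨c, j⟩ := j
  match s with
  | 0 => cases b <;> cases c <;> simp [evval_zero, qpar, kdq]
  | 1 => cases b <;> cases c <;> simp [slot_evval_one, qpar]
  | s + 2 => simp [evval_add_two]

/-- The matrix with entries `x^i_{p,q} + (-1)^j ξ^i_{p,q}`, where `i` is the tensor slot. -/
def slotMatrix {l : ℕ} (j : ℕ) (i : Fin l) : Matrix (Fin n) (Fin n) (TQ n l) :=
  .of fun p q => xT i p q + (-1 : ℂ) ^ j • xiT i p q

lemma mapMatrix_mapSlots_slotMatrix {k l : ℕ} (g : Fin k ↪ Fin l) (j : ℕ) (i : Fin k) :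
    (TQ.mapSlots g).mapMatrix (slotMatrix j i : Matrix (Fin n) (Fin n) (TQ n k)) =
      slotMatrix j (g i) := by
  ext p q
  simp [slotMatrix]

lemma strictChainSum_slotMatrix_apply (l r : ℕ) (p q : Fin n) :
    strictChainSum (slotMatrix (n := n) (l := l)) r p q = chainProdInc n l r p q := by
  have strictMono_iff (iv : Fin r → Fin l) : StrictMono iv ↔ ∀ a b, a < b → iv a < iv b := Iff.rfl
  simp only [strictChainSum, chainProdInc, Matrix.sum_apply, matrix_prod_ofFn_apply,
    Finset.sum_filter, slotMatrix, Matrix.of_apply, ← strictMono_iff]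
  rw [Finset.sum_comm]
  refine Finset.sum_congr rfl fun iv _ => ?_
  by_cases h : StrictMono iv <;> simp [h]

/-- The family `G` agrees on the generators with `ev^{⊗k} ∘ Δ_k` (`k ≥ 1`): `G 1 = ev`, and
`Δ_{k+1} = (Δ_k ⊗ id) ∘ Δ`, the new factor being the rightmost one, which is slot `0`. -/
structure IsIteratedEval (G : ∀ k, YQ n →ₐ[ℂ] TQ n k) : Prop where
  one (s : ℕ) (i j : QIdx n) : G 1 (TY s i j) = TQ.slot 0 (evval s i j)
  succ (k : ℕ) (hk : 1 ≤ k) (s : ℕ) (i j : QIdx n) :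
    G (k + 1) (TY s i j) = ∑ t : Fin (s + 1), ∑ v : QIdx n,
      (-1 : ℂ) ^ ((qpar i + qpar v) * (qpar j + qpar v)) •
        (TQ.mapSlots (Fin.succEmb k) (G k (TY t i v)) * TQ.slot 0 (evval (s - t) v j))

variable {G : ∀ k, YQ n →ₐ[ℂ] TQ n k} {k : ℕ}

namespace IsIteratedEval

lemma parity_apply_TY (hG : IsIteratedEval G) (hk : 1 ≤ k) (s : ℕ) (i j : QIdx n) :
    TQ.parity n k (G k (TY s i j)) = (-1 : ℂ) ^ (qpar i + qpar j) • G k (TY s i j) := by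
  induction k, hk using Nat.le_induction generalizing s i j with
  | base => simp only [hG.one, parity_slot_evval]
  | succ k hk ih =>
    have sign_mul (v : QIdx n) :
        (-1 : ℂ) ^ (qpar i + qpar v) * (-1) ^ (qpar v + qpar j) = (-1) ^ (qpar i + qpar j) := by
      rw [← pow_add, add_comm (qpar v), add_add_add_comm, pow_add, ← two_mul, pow_mul, neg_one_sq,
        one_pow, mul_one]
    simp only [hG.succ k hk, map_sum, map_smul, map_mul, TQ.parity_mapSlots, ih,
      parity_slot_evval, smul_mul_smul_comm, sign_mul, Finset.smul_sum]
    simp only [smul_comm ((-1 : ℂ) ^ (qpar i + qpar j))]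

lemma apply_TY_succ_succ (hG : IsIteratedEval G) (hk : 1 ≤ k) (s : ℕ) (i j : QIdx n) :
    G (k + 1) (TY (s + 1) i j) = TQ.mapSlots (Fin.succEmb k) (G k (TY (s + 1) i j)) +
      ∑ v : QIdx n, (-1 : ℂ) ^ ((qpar i + qpar v) * (qpar j + qpar v)) •
        (TQ.mapSlots (Fin.succEmb k) (G k (TY s i v)) * TQ.slot 0 (evval 1 v j)) := by
  have earlier_term (t : Fin s) (v : QIdx n) : evval (s + 1 - t) v j = 0 := by
    rw [show s + 1 - t = (s - t - 1) + 2 by lia, evval_add_two]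
  rw [hG.succ k hk, Fin.sum_univ_castSucc, Fin.sum_univ_castSucc]
  simp [earlier_term, evval_zero, kdq, add_comm]

lemma apply_TY_false_succ_succ (hG : IsIteratedEval G) (hk : 1 ≤ k) (s : ℕ) (b : Bool)
    (p q : Fin n) :
    G (k + 1) (TY (s + 1) (b, q) (false, p)) =
      TQ.mapSlots (Fin.succEmb k) (G k (TY (s + 1) (b, q) (false, p))) +
        ∑ v, (-1 : ℂ) • (xT 0 p v * TQ.mapSlots (Fin.succEmb k) (G k (TY s (b, q) (false, v))) +
          (-1 : ℂ) ^ s •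
            (xiT 0 p v * TQ.mapSlots (Fin.succEmb k) (G k (TY s (!b, q) (false, v))))) := by
  have zero_notMem_range : (0 : Fin (k + 1)) ∉ Set.range (Fin.succEmb k) := by simp
  have negative_column (v : Fin n) :
      TY s (b, q) (true, v) = (-1 : ℂ) ^ s • TY s (!b, q) (false, v) := by
    simpa [qneg] using TY_qneg s (!b, q) (false, v)
  rw [hG.apply_TY_succ_succ hk, Fintype.sum_prod_type_right]
  congr 1
  refine Finset.sum_congr rfl fun v _ => ?_
  simp only [Fintype.sum_bool, negative_column, slot_evval_one, map_smul]
  cases b <;> simp only [qpar, Bool.xor_false, Bool.not_true, Bool.not_false, Bool.false_eq_true,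
    if_true, if_false, mul_smul_comm, smul_mul_assoc, TQ.mapSlots_mul_xT _ _ _ zero_notMem_range,
    TQ.mapSlots_mul_xiT _ _ _ zero_notMem_range, hG.parity_apply_TY hk, map_smul] <;> module

end IsIteratedEval

/-- The matrix of `(-1)^s (G_k(T^{(s)}_{q,p}) + G_k(T^{(s)}_{-q,p}))`, `p` being the row index, so
that the slots created by the recursion for `G` act by multiplication on the left. -/
def evalMatrix (G : ∀ k, YQ n →ₐ[ℂ] TQ n k) (k s : ℕ) : Matrix (Fin n) (Fin n) (TQ n k) :=
  .of fun p q => (-1 : ℂ) ^ s • ∑ b, G k (TY s (b, q) (false, p))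

lemma evalMatrix_zero (G : ∀ k, YQ n →ₐ[ℂ] TQ n k) (k : ℕ) : evalMatrix G k 0 = 1 := by
  ext p q
  simp only [evalMatrix, Matrix.of_apply, Fintype.sum_bool, TY_zero]
  simp [kdq, Matrix.one_apply, eq_comm]

namespace IsIteratedEval

lemma evalMatrix_succ_succ (hG : IsIteratedEval G) (hk : 1 ≤ k) (s : ℕ) :
    evalMatrix G (k + 1) (s + 1) =
      (TQ.mapSlots (Fin.succEmb k)).mapMatrix (evalMatrix G k (s + 1)) +
        slotMatrix s 0 * (TQ.mapSlots (Fin.succEmb k)).mapMatrix (evalMatrix G k s) := by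
  ext p q
  have column_term (v : Fin n) :
      (-1 : ℂ) ^ (s + 1) • ∑ b, (-1 : ℂ) •
          (xT 0 p v * TQ.mapSlots (Fin.succEmb k) (G k (TY s (b, q) (false, v))) +
            (-1 : ℂ) ^ s •
              (xiT 0 p v * TQ.mapSlots (Fin.succEmb k) (G k (TY s (!b, q) (false, v))))) =
        slotMatrix s 0 p v * TQ.mapSlots (Fin.succEmb k) (evalMatrix G k s v q) := by
    simp only [evalMatrix, slotMatrix, Matrix.of_apply, Fintype.sum_bool, map_smul, map_add,
      mul_smul_comm, smul_mul_assoc, add_mul, mul_add, Bool.not_true, Bool.not_false]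
    module
  simp only [Matrix.add_apply, Matrix.mul_apply, AlgHom.mapMatrix_apply, Matrix.map_apply,
    ← column_term]
  simp only [evalMatrix, Matrix.of_apply, hG.apply_TY_false_succ_succ hk]
  rw [Finset.sum_add_distrib, Finset.sum_comm, smul_add, map_smul, map_sum]
  congr 1
  exact Finset.smul_sum

lemma evalMatrix_one_one (hG : IsIteratedEval G) : evalMatrix G 1 1 = slotMatrix 0 0 := by
  ext p q
  simp only [evalMatrix, slotMatrix, Matrix.of_apply, hG.one, Fintype.sum_bool, slot_evval_one,
    qpar, Bool.xor_false, Bool.false_eq_true, if_true, if_false]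
  module

lemma evalMatrix_one_add_two (hG : IsIteratedEval G) (s : ℕ) : evalMatrix G 1 (s + 2) = 0 := by
  ext p q
  simp [evalMatrix, hG.one, evval_add_two]

lemma evalMatrix_eq_strictChainSum (hG : IsIteratedEval G) (hk : 1 ≤ k) (s : ℕ) :
    evalMatrix G k s = strictChainSum slotMatrix s := by
  induction k, hk using Nat.le_induction generalizing s with
  | base =>
    match s with
    | 0 => rw [evalMatrix_zero, strictChainSum_zero]
    | 1 =>
      rw [hG.evalMatrix_one_one, strictChainSum_succ, strictChainSum_zero,
        strictChainSum_eq_zero_of_lt _ (Nat.succ_pos 0), zero_add, mul_one]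
    | s + 2 =>
      rw [hG.evalMatrix_one_add_two, strictChainSum_eq_zero_of_lt _ (by lia)]
  | succ k hk ih =>
    cases s with
    | zero => rw [evalMatrix_zero, strictChainSum_zero]
    | succ s =>
      simp only [hG.evalMatrix_succ_succ hk, ih, map_strictChainSum, mapMatrix_mapSlots_slotMatrix,
        strictChainSum_succ, Fin.coe_succEmb]

lemma smul_chainProdInc (hG : IsIteratedEval G) (hk : 1 ≤ k) (r : ℕ) (p q : Fin n) :
    (-1 : ℂ) ^ r • chainProdInc n k r p q =
      G k (TY r (false, q) (false, p)) + G k (TY r (true, q) (false, p)) := by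
  rw [← strictChainSum_slotMatrix_apply, ← hG.evalMatrix_eq_strictChainSum hk, evalMatrix,
    Matrix.of_apply, Fintype.sum_bool, smul_smul, ← mul_pow, neg_one_mul, neg_neg, one_pow,
    one_smul, add_comm]

lemma smul_parity_chainProdInc (hG : IsIteratedEval G) (hk : 1 ≤ k) (r : ℕ) (p q : Fin n) :
    (-1 : ℂ) ^ r • TQ.parity n k (chainProdInc n k r p q) =
      G k (TY r (false, q) (false, p)) - G k (TY r (true, q) (false, p)) := by
  rw [← map_smul, hG.smul_chainProdInc hk, map_add, hG.parity_apply_TY hk, hG.parity_apply_TY hk]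
  simp only [qpar, Bool.false_eq_true, if_true, if_false, add_zero, pow_zero, pow_one, one_smul]
  module

end IsIteratedEval

end Yangian

/-- Let `n, l ≥ 1`, `1 ≤ p,q ≤ n` and `r ≥ 1`.  Then in
`U(Q(n))^{⊗l}`, `ev^{⊗l}∘Δ_l(T^{(r)}_{q,p})` equals `(-1)^r` times the even component,
and `ev^{⊗l}∘Δ_l(T^{(r)}_{-q,p})` equals `(-1)^r` times the odd component, of
`Σ_{p_1,…,p_{r-1}} Σ_{1 ≤ i_1 < … < i_r ≤ l} Π_{a=1}^r
(x^{i_a}_{p_{a-1},p_a} + (-1)^{r-a} ξ^{i_a}_{p_{a-1},p_a})` (`p_0 = p`, `p_r = q`).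
Here `G k = ev^{⊗k}∘Δ_k : Y(Q(n)) → U(Q(n))^{⊗k}` is characterized on the generators
by `G 1 = ev` and the recursion coming from
`Δ_k(T^{(s)}_{i,j}) = Σ_t Σ_m (-1)^{(p(i)+p(m))(p(j)+p(m))} Δ_{k-1}(T^{(t)}_{i,m}) ⊗ T^{(s-t)}_{m,j}`;
`emb k a` is the embedding of `U(Q(n))` into the `a`-th tensor slot, `ishUp k` the
slot-raising embedding `U(Q(n))^{⊗k} → U(Q(n))^{⊗(k+1)}` and `σT` the parity involution. -/
theorem statement15 (n l : ℕ) (hn : 0 < n) (hl : 1 ≤ l) (p q : Fin n)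
    (r : ℕ) (hr : 1 ≤ r)
    (σT : TQ n l →ₐ[ℂ] TQ n l)
    (hσTx : ∀ (a : Fin l) (i j : Fin n), σT (xT a i j) = xT a i j)
    (hσTxi : ∀ (a : Fin l) (i j : Fin n), σT (xiT a i j) = -xiT a i j)
    (emb : ∀ k : ℕ, Fin k → (UQ n →ₐ[ℂ] TQ n k))
    (hembx : ∀ (k : ℕ) (a : Fin k) (i j : Fin n), emb k a (Ue i j) = xT a i j)
    (hembxi : ∀ (k : ℕ) (a : Fin k) (i j : Fin n), emb k a (Uf i j) = xiT a i j)
    (ishUp : ∀ k : ℕ, TQ n k →ₐ[ℂ] TQ n (k + 1))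
    (hishx : ∀ (k : ℕ) (a : Fin k) (i j : Fin n), ishUp k (xT a i j) = xT a.succ i j)
    (hishxi : ∀ (k : ℕ) (a : Fin k) (i j : Fin n), ishUp k (xiT a i j) = xiT a.succ i j)
    (G : ∀ k : ℕ, YQ n →ₐ[ℂ] TQ n k)
    (hG1 : ∀ (s : ℕ) (i j : QIdx n), G 1 (TY s i j) = emb 1 0 (evval s i j))
    (hGstep : ∀ (k : ℕ), 1 ≤ k → ∀ (s : ℕ) (i j : QIdx n),
      G (k + 1) (TY s i j) =
        ∑ t : Fin (s + 1), ∑ kk : QIdx n,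
          ((-1 : ℂ) ^ ((qpar i + qpar kk) * (qpar j + qpar kk))) •
            (ishUp k (G k (TY t.val i kk)) * emb (k + 1) 0 (evval (s - t.val) kk j))) :
    G l (TY r (false, q) (false, p)) =
      ((-1 : ℂ) ^ r) • ((2⁻¹ : ℂ) •
        (chainProdInc n l r p q + σT (chainProdInc n l r p q))) ∧
    G l (TY r (true, q) (false, p)) =
      ((-1 : ℂ) ^ r) • ((2⁻¹ : ℂ) •
        (chainProdInc n l r p q - σT (chainProdInc n l r p q))) := by
  have hσT : σT = TQ.parity n l :=
    TQ.algHom_ext (by simp [hσTx]) fun a i j => by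
      rw [hσTxi, TQ.parity_xiT, neg_one_smul ℂ (xiT a i j)]
  have hemb (k : ℕ) (a : Fin k) : emb k a = TQ.slot a :=
    UQ.algHom_ext (by simp [hembx]) (by simp [hembxi])
  have hishUp (k : ℕ) : ishUp k = TQ.mapSlots (Fin.succEmb k) :=
    TQ.algHom_ext (by simp [hishx]) (by simp [hishxi])
  have hG : IsIteratedEval G :=
    ⟨by simpa only [hemb] using hG1, by simpa only [hemb, hishUp] using hGstep⟩
  have even_add_odd := hG.smul_chainProdInc hl r p q
  have even_sub_odd := hG.smul_parity_chainProdInc hl r p q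
  rw [hσT]
  constructor
  · linear_combination (norm := module) (-2⁻¹ : ℂ) • even_add_odd - (2⁻¹ : ℂ) • even_sub_odd
  · linear_combination (norm := module) (-2⁻¹ : ℂ) • even_add_odd + (2⁻¹ : ℂ) • even_sub_odd
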